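/- Let G be a finite simple graph with node set N and edge set E, and let P be any MultiSLP equivalent to P_G. Then there exists a MultiSLP Q equivalent to P_G such that: #_M(Q) ≤ #_M(P); every temporal (non-returned) variable of Q is of the form Γ_a ← ρ ⊕ a for some node a ∈ N; and the defining statement of every returned goal variable g of Q has one of the two forms g ← Γ_a ⊕ x (for some node a ∈ N with Γ_a in Q and some constant x) or g ← ρ ⊕ x ⊕ y (for constants x, y). In particular, Q computes every goal without using the XOR-cancellation law. -/

import Mathlib

/-- Terms of a MultiSLP over a set of constants `C`:
either a constant, or a variable referenced by its statement index. -/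
inductive Term (C : Type) where
  | const : C → Term C
  | var : ℕ → Term C
  deriving DecidableEq

/-- A MultiSLP over the constants `C`: a sequence of statements
`v_i ← ⊕(t_{i,1},…,t_{i,n_i})` (statement `i` defines variable `i`, each `n_i ≥ 2`,
and every variable used in statement `i` has index `< i`), followed by a return
list of terms whose variables are all defined. -/
structure MultiSLP (C : Type) where
  stmts : List (List (Term C))
  ret : List (Term C)
  arity : ∀ args ∈ stmts, 2 ≤ args.length
  wfStmts : ∀ i, i < stmts.length → ∀ t ∈ stmts.getD i [], ∀ j, t = Term.var j → j < i
  wfRet : ∀ t ∈ ret, ∀ j, t = Term.var j → j < stmts.length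

/-- The value of a constant `c` is the standard basis vector `e_c` of `GF(2)^C`. -/
def eConst {C : Type} [DecidableEq C] (c : C) : C → ZMod 2 := fun d => if d = c then 1 else 0

/-- Value of a term, given the list of values of the previously defined variables. -/
def Term.eval {C : Type} [DecidableEq C] (env : List (C → ZMod 2)) : Term C → (C → ZMod 2)
  | .const c => eConst c
  | .var j => env.getD j 0

/-- Values of the variables of a MultiSLP: the value of variable `i` is the GF(2)-sum
(XOR) of the values of the arguments of statement `i`. -/
def MultiSLP.envList {C : Type} [DecidableEq C] (P : MultiSLP C) : List (C → ZMod 2) :=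
  P.stmts.foldl (fun env args => env ++ [(args.map (Term.eval env)).sum]) []

/-- The result of a MultiSLP: the tuple of values of its returned terms. -/
def MultiSLP.result {C : Type} [DecidableEq C] (P : MultiSLP C) : List (C → ZMod 2) :=
  P.ret.map (Term.eval P.envList)

/-- The value of variable `i` of a MultiSLP. -/
def MultiSLP.value {C : Type} [DecidableEq C] (P : MultiSLP C) (i : ℕ) : C → ZMod 2 :=
  P.envList.getD i 0

/-- The memory-access cost `#_M(P) = Σ_i (n_i + 1)`. -/
def MultiSLP.costM {C : Type} (P : MultiSLP C) : ℕ :=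
  (P.stmts.map fun args => args.length + 1).sum
/-- The constants used by `P_G`: the fresh constant `ρ`, the nodes of `G`,
and for each node `a` the fresh local nodes `λ_a` and `μ_a`. -/
inductive Const (N : Type) where
  | rho : Const N
  | node : N → Const N
  | lam : N → Const N
  | mu : N → Const N
  deriving DecidableEq

/-- The result of `P_G`: the family of values `e_ρ + e_x + e_y` indexed by the
edges of `G_modif` (first the edges of `G`, enumerated by the list `L`, then for
each node `a` — enumerated by `nodes` — the two local edges `(a,λ_a)` and `(a,μ_a)`).
A MultiSLP `Q` is equivalent to `P_G` iff `Q.result = targetValues L nodes`. -/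
def targetValues {N : Type} [DecidableEq N] (L : List (N × N)) (nodes : List N) :
    List (Const N → ZMod 2) :=
  (L.map fun p =>
    eConst Const.rho + eConst (Const.node p.1) + eConst (Const.node p.2))
  ++ nodes.flatMap fun a =>
      [eConst Const.rho + eConst (Const.node a) + eConst (Const.lam a),
       eConst Const.rho + eConst (Const.node a) + eConst (Const.mu a)]


/-! ### Goals and coordinates -/

abbrev Idx (N : Type) := (N × N) ⊕ (N × Bool)

def locC {N : Type} (p : N × Bool) : Const N :=
  if p.2 then Const.lam p.1 else Const.mu p.1

def gx {N : Type} : Idx N → Const N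
  | .inl p => Const.node p.1
  | .inr p => Const.node p.1

def gy {N : Type} : Idx N → Const N
  | .inl p => Const.node p.2
  | .inr p => locC p

def gv {N : Type} [DecidableEq N] (i : Idx N) : Const N → ZMod 2 :=
  eConst Const.rho + eConst (gx i) + eConst (gy i)

def gamV {N : Type} [DecidableEq N] (a : N) : Const N → ZMod 2 :=
  eConst Const.rho + eConst (Const.node a)

def hit {N : Type} (X : Finset (Const N)) : Idx N → Prop
  | .inl p => Const.node p.1 ∈ X ∨ Const.node p.2 ∈ X
  | .inr p => locC p ∈ X

def touched {N : Type} (S : Finset N) : Idx N → Prop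
  | .inl p => p.1 ∈ S ∨ p.2 ∈ S
  | .inr p => p.1 ∈ S

set_option linter.unusedSectionVars false
section
variable {N : Type} [DecidableEq N]

@[simp] lemma locC_ne_rho (p : N × Bool) : locC p ≠ Const.rho := by
  unfold locC; split <;> simp
@[simp] lemma locC_ne_node (p : N × Bool) (a : N) : locC p ≠ Const.node a := by
  unfold locC; split <;> simp
@[simp] lemma rho_ne_locC (p : N × Bool) : Const.rho ≠ locC p := (locC_ne_rho p).symm
@[simp] lemma node_ne_locC (p : N × Bool) (a : N) : Const.node a ≠ locC p :=
  (locC_ne_node p a).symm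
@[simp] lemma locC_inj (p q : N × Bool) : locC p = locC q ↔ p = q := by
  obtain ⟨a, b⟩ := p
  obtain ⟨c, d⟩ := q
  cases b <;> cases d <;> simp [locC]

lemma eC_apply (c d : Const N) : eConst c d = if d = c then 1 else 0 := rfl
@[simp] lemma gv_rho (i : Idx N) : gv i Const.rho = 1 := by
  rcases i with p | p <;> simp [gv, gx, gy, eC_apply]
@[simp] lemma gv_loc_inl (p : N × N) (q : N × Bool) : gv (.inl p) (locC q) = 0 := by
  simp [gv, gx, gy, eC_apply]
@[simp] lemma gv_loc_inr (p q : N × Bool) :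
    gv (.inr p) (locC q) = if q = p then 1 else 0 := by
  simp [gv, gx, gy, eC_apply]
@[simp] lemma gv_node_inr (p : N × Bool) (a : N) :
    gv (.inr p) (Const.node a) = if a = p.1 then 1 else 0 := by
  simp [gv, gx, gy, eC_apply]
@[simp] lemma gv_node_inl (p : N × N) (a : N) :
    gv (.inl p) (Const.node a) = (if a = p.1 then 1 else 0) + (if a = p.2 then 1 else 0) := by
  simp [gv, gx, gy, eC_apply]
@[simp] lemma gam_rho (a : N) : gamV a Const.rho = 1 := by simp [gamV, eC_apply]
@[simp] lemma gam_node (a b : N) : gamV a (Const.node b) = if b = a then 1 else 0 := by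
  simp [gamV, eC_apply]
@[simp] lemma gam_loc (a : N) (q : N × Bool) : gamV a (locC q) = 0 := by
  simp [gamV, eC_apply]

lemma z2_self (v : Const N → ZMod 2) : v + v = 0 := by
  funext c
  simpa using CharTwo.add_self_eq_zero (v c)

lemma z2_move {v g s : Const N → ZMod 2} (h : v + g = s) : v = g + s := by
  rw [← h, add_comm v g, ← add_assoc, z2_self, zero_add]

lemma z2_move' {v g s : Const N → ZMod 2} (h : v + g = s) : g = v + s := by
  rw [← h, ← add_assoc, z2_self, zero_add]

/-- Two distinct node coordinates determine a goal. -/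
lemma gv_det (j : Idx N) (a b : N) (hab : a ≠ b) (ha : gv j (Const.node a) = 1)
    (hb : gv j (Const.node b) = 1) : gv j = gv (.inl (a, b)) := by
  rcases j with ⟨c, d⟩ | ⟨c, d⟩
  · simp only [gv_node_inl] at ha hb
    have : (a = c ∧ b = d) ∨ (a = d ∧ b = c) := by
      by_cases h1 : a = c <;> by_cases h2 : a = d <;> by_cases h3 : b = c <;>
        by_cases h4 : b = d <;> simp_all
    rcases this with ⟨rfl, rfl⟩ | ⟨rfl, rfl⟩
    · rfl
    · simp only [gv, gx, gy]; abel
  · simp only [gv_node_inr] at ha hb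
    split_ifs at ha hb <;> simp_all

lemma gv_pair (a b c d : N) (hab : a ≠ b)
    (ha : gv (.inl (c, d)) (Const.node a) = 1)
    (hb : gv (.inl (c, d)) (Const.node b) = 1) : (a = c ∧ b = d) ∨ (a = d ∧ b = c) := by
  simp only [gv_node_inl] at ha hb
  by_cases h1 : a = c <;> by_cases h2 : a = d <;> by_cases h3 : b = c <;>
    by_cases h4 : b = d <;> simp_all

lemma gv_ne_const (j : Idx N) (hne : ∀ p, j = .inl p → p.1 ≠ p.2) (c : Const N) :
    gv j ≠ eConst c := by
  intro h
  have h1 := congrFun h Const.rho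
  have h2 := congrFun h (gx j)
  have hc : c = Const.rho := by
    by_contra hc
    simp [eC_apply, Ne.symm hc] at h1
  subst hc
  rcases j with p | p
  · have := hne p rfl
    simp [gx, eC_apply, this] at h2
  · simp [gx, eC_apply] at h2

lemma gv_ne_gam (j : Idx N) (hne : ∀ p, j = .inl p → p.1 ≠ p.2) (c : N) :
    gv j ≠ gamV c := by
  intro h
  rcases j with p | p
  · have := hne p rfl
    have h2 := congrFun h (.node p.1)
    have h3 := congrFun h (.node p.2)
    simp [this, this.symm] at h2 h3
    exact this (h2.trans h3.symm)
  · have h2 := congrFun h (locC p)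
    simp at h2

lemma exists_hit (i : Idx N) : ∃ c : Const N, ∀ X, c ∈ X → hit X i := by
  rcases i with p | p
  · exact ⟨.node p.1, fun X h => Or.inl h⟩
  · exact ⟨locC p, fun X h => h⟩

lemma solo (ok : Idx N → Prop) (hinj : ∀ i j, ok i → ok j → gv i = gv j → i = j)
    (hne : ∀ p, ok (.inl p) → p.1 ≠ p.2) (S : Finset N) (ord : Idx N → ℕ)
    (v : Const N → ZMod 2) (hv : ∀ a, v ≠ gamV a) (A : Idx N → Prop)
    (hA : ∀ i, A i → ok i ∧ ¬ touched S i ∧ ((∃ c, v + gv i = eConst c) ∨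
      (∃ c ∈ S, v + gv i = gamV c) ∨ ∃ j, ok j ∧ ord j < ord i ∧ v + gv i = gv j)) :
    ∃ X : Finset (Const N), X.card ≤ 2 ∧ ∀ i, A i → hit X i := by
  classical
  have hne' : ∀ i, ok i → ∀ p, i = .inl p → p.1 ≠ p.2 := by
    rintro i hi p rfl; exact hne p hi
  by_cases hloc : ∃ p, A (.inr p)
  · obtain ⟨p, hp⟩ := hloc
    obtain ⟨okp, -, hs⟩ := hA _ hp
    have hvl : v (locC p) = 1 := by
      rcases hs with ⟨c, hc⟩ | ⟨c, -, hc⟩ | ⟨j, okj, hj, hc⟩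
      · rw [z2_move hc]
        by_cases h : c = locC p
        · exfalso
          apply hv p.1
          rw [z2_move hc, h]
          simp only [gv, gx, gy, gamV]
          rw [add_assoc, z2_self, add_zero]
        · simp [eC_apply, Ne.symm h]
      · rw [z2_move hc]; simp
      · rw [z2_move hc]
        rcases j with q | q
        · simp
        · have : p ≠ q := by rintro rfl; omega
          simp [this]
    have key : ∀ i, A i → i ≠ .inr p →
        (v + gv i = eConst (locC p) ∨ v + gv i = gv (.inr p)) := by
      intro i hi hip
      obtain ⟨oki, -, hs⟩ := hA _ hi
      have h0 : gv i (locC p) = 0 := by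
        rcases i with q | q
        · simp
        · have : p ≠ q := by rintro rfl; exact hip rfl
          simp [this]
      rcases hs with ⟨c, hc⟩ | ⟨c, -, hc⟩ | ⟨j, okj, hj, hc⟩
      · have := congrFun hc (locC p)
        simp [h0, hvl, eC_apply] at this
        left; rw [hc, this]
      · have := congrFun hc (locC p)
        simp [h0, hvl] at this
      · have := congrFun hc (locC p)
        rcases j with q | q
        · simp [h0, hvl] at this
        · simp [h0, hvl] at this
          right; rw [hc, this]
    by_cases h2 : ∃ i, A i ∧ i ≠ .inr p
    · obtain ⟨i, hi, hip⟩ := h2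
      obtain ⟨c, hc⟩ := exists_hit i
      refine ⟨{locC p, c}, Finset.card_le_two, ?_⟩
      intro k hk
      by_cases hkp : k = .inr p
      · subst hkp; simp [hit]
      · have : k = i := by
          apply hinj _ _ (hA _ hk).1 (hA _ hi).1
          have e1 := key i hi hip
          have e2 := key k hk hkp
          rcases e1 with e1 | e1 <;> rcases e2 with e2 | e2
          · rw [z2_move' e1, z2_move' e2]
          · exfalso
            have a1 := congrFun e1 .rho
            have a2 := congrFun e2 .rho
            simp only [Pi.add_apply, gv_rho] at a1 a2
            rw [a1] at a2
            simp [eC_apply] at a2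
          · exfalso
            have a1 := congrFun e1 .rho
            have a2 := congrFun e2 .rho
            simp only [Pi.add_apply, gv_rho] at a1 a2
            rw [a2] at a1
            simp [eC_apply] at a1
          · rw [z2_move' e1, z2_move' e2]
        subst this
        exact hc _ (by simp)
    · push Not at h2
      refine ⟨{locC p}, by simp, fun k hk => ?_⟩
      rw [h2 k hk]; simp [hit]
  · push Not at hloc
    by_cases hemp : ∃ p, A (.inl p)
    swap
    · push Not at hemp
      refine ⟨∅, by simp, ?_⟩
      rintro (q | q) hq
      · exact absurd hq (hemp q)
      · exact absurd hq (hloc q)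
    obtain ⟨⟨a, b⟩, hg⟩ := hemp
    obtain ⟨ok1, ut1, hs1⟩ := hA _ hg
    have hab : a ≠ b := hne _ ok1
    -- generic situation
    have main : v (.node a) = 1 → v (.node b) = 1 →
        ∃ X : Finset (Const N), X.card ≤ 2 ∧ ∀ i, A i → hit X i := by
      intro va vb
      refine ⟨{.node a, .node b}, Finset.card_le_two, ?_⟩
      rintro (⟨c, d⟩ | q) hq
      swap
      · exact absurd hq (hloc q)
      by_contra hh
      simp only [hit, Finset.mem_insert, Finset.mem_singleton, Const.node.injEq] at hh
      push Not at hh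
      obtain ⟨⟨h1, h2⟩, h3, h4⟩ := hh
      obtain ⟨ok2, -, hs⟩ := hA _ hq
      rcases hs with ⟨e, hc⟩ | ⟨e, -, hc⟩ | ⟨j, okj, hj, hc⟩
      · have x1 := congrFun hc (.node a)
        have x2 := congrFun hc (.node b)
        simp [va, vb, h1.symm, h2.symm, h3.symm, h4.symm, eC_apply] at x1 x2
        rw [← x2] at x1
        exact hab (by simpa using x1)
      · have x1 := congrFun hc (.node a)
        have x2 := congrFun hc (.node b)
        simp [va, vb, h1.symm, h2.symm, h3.symm, h4.symm] at x1 x2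
        exact hab (x1.trans x2.symm)
      · have x1 := congrFun hc (.node a)
        have x2 := congrFun hc (.node b)
        simp only [Pi.add_apply, va, vb, gv_node_inl, h1.symm, h2.symm, h3.symm, h4.symm,
          if_false, add_zero] at x1 x2
        have e1 := gv_det j a b hab x1.symm x2.symm
        have e2 := hinj _ _ okj ok1 e1
        subst e2
        have e3 := z2_move' hc
        rcases hs1 with ⟨e, hc'⟩ | ⟨e, -, hc'⟩ | ⟨j', okj', hj', hc'⟩
        · exact gv_ne_const _ (hne' _ ok2) e (e3.trans hc')
        · exact gv_ne_gam _ (hne' _ ok2) e (e3.trans hc')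
        · have := hinj _ _ ok2 okj' (e3.trans hc')
          subst this
          omega
    -- shared vertex
    have shared : ∀ x y d, x ≠ y → A (.inl (x, y)) ∨ A (.inl (y, x)) → d ≠ y →
        v = eConst (.node y) + eConst (.node d) →
        ∃ X : Finset (Const N), X.card ≤ 2 ∧ ∀ i, A i → hit X i := by
      intro x y d _ _ hdy hveq
      have vy : v (.node y) = 1 := by simp [hveq, eC_apply, hdy.symm]
      have vd : v (.node d) = 1 := by simp [hveq, eC_apply, hdy]
      refine ⟨{.node y, .node d}, Finset.card_le_two, ?_⟩
      rintro (⟨c, e⟩ | q) hq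
      swap
      · exact absurd hq (hloc q)
      by_contra hh
      simp only [hit, Finset.mem_insert, Finset.mem_singleton, Const.node.injEq] at hh
      push Not at hh
      obtain ⟨⟨h1, h2⟩, h3, h4⟩ := hh
      obtain ⟨ok2, -, hs⟩ := hA _ hq
      rcases hs with ⟨f, hc⟩ | ⟨f, -, hc⟩ | ⟨j, okj, hj, hc⟩
      · have x1 := congrFun hc (.node y)
        have x2 := congrFun hc (.node d)
        simp [vy, vd, h1.symm, h2.symm, h3.symm, h4.symm, eC_apply] at x1 x2
        rw [← x2] at x1
        exact hdy.symm (by simpa using x1)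
      · have x1 := congrFun hc (.node y)
        have x2 := congrFun hc (.node d)
        simp [vy, vd, h1.symm, h2.symm, h3.symm, h4.symm] at x1 x2
        exact hdy (x2.trans x1.symm)
      · have x1 := congrFun hc (.node y)
        have x2 := congrFun hc (.node d)
        simp only [Pi.add_apply, vy, vd, gv_node_inl, h1.symm, h2.symm, h3.symm, h4.symm,
          if_false, add_zero] at x1 x2
        have e1 := gv_det j y d hdy.symm x1.symm x2.symm
        have e3 := z2_move' hc
        have : gv (.inl (c, e)) = eConst (Const.rho : Const N) := by
          rw [e3, hveq, e1]
          simp only [gv, gx, gy]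
          rw [add_assoc (eConst Const.rho), add_comm (eConst Const.rho), ← add_assoc, z2_self,
            zero_add]
        exact gv_ne_const _ (hne' _ ok2) _ this
    rcases hs1 with ⟨c, hc⟩ | ⟨c, hcS, hc⟩ | ⟨j, okj, hj, hc⟩
    · have hv1 := z2_move hc
      by_cases h1 : c = .node a
      · exfalso
        apply hv b
        rw [hv1, h1]
        simp only [gv, gx, gy, gamV]
        rw [add_right_comm, add_assoc (eConst Const.rho), z2_self, add_zero]
      by_cases h2 : c = .node b
      · exfalso
        apply hv a
        rw [hv1, h2]
        simp only [gv, gx, gy, gamV]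
        rw [add_assoc, z2_self, add_zero]
      apply main
      · rw [hv1]; simp [eC_apply, hab, Ne.symm h1]
      · rw [hv1]; simp [eC_apply, hab.symm, Ne.symm h2]
    · have hv1 := z2_move hc
      simp only [touched, not_or] at ut1
      have h1 : a ≠ c := by rintro rfl; exact ut1.1 hcS
      have h2 : b ≠ c := by rintro rfl; exact ut1.2 hcS
      apply main
      · rw [hv1]; simp [hab, h1]
      · rw [hv1]; simp [hab.symm, h2]
    · have hv1 := z2_move hc
      rcases j with ⟨c, d⟩ | q
      · have hcd : c ≠ d := hne _ okj
        have hnn : ¬ (a = c ∧ b = d) := by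
          rintro ⟨rfl, rfl⟩; omega
        have hnn' : ¬ (a = d ∧ b = c) := by
          rintro ⟨rfl, rfl⟩
          have : (Sum.inl (b, a) : Idx N) = .inl (a, b) := by
            apply hinj _ _ okj ok1
            simp only [gv, gx, gy]; abel
          rw [this] at hj; omega
        have sh : ∀ r x y z : Const N → ZMod 2, (r + x + y) + (r + x + z) = y + z := by
          intro r x y z
          have : (r + x + y) + (r + x + z) = (r + r) + (x + x) + (y + z) := by abel
          rw [this, z2_self, z2_self]; simp
        simp only [gv, gx, gy] at hv1
        by_cases h1 : a = c
        · subst h1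
          have : d ≠ b := fun h => hnn ⟨rfl, h.symm⟩
          exact shared a b d hab (Or.inl hg) this (by rw [hv1, sh])
        by_cases h2 : a = d
        · subst h2
          have : c ≠ b := fun h => hnn' ⟨rfl, h.symm⟩
          refine shared a b c hab (Or.inl hg) this ?_
          rw [hv1, add_right_comm _ (eConst (Const.node c)), sh]
        by_cases h3 : b = c
        · subst h3
          have : d ≠ a := fun h => h2 h.symm
          refine shared b a d hab.symm (Or.inr hg) this ?_
          rw [hv1, add_right_comm _ (eConst (Const.node a)), sh]
        by_cases h4 : b = d
        · subst h4
          have : c ≠ a := fun h => h1 h.symm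
          refine shared b a c hab.symm (Or.inr hg) this ?_
          rw [hv1, add_right_comm _ (eConst (Const.node a)),
            add_right_comm _ (eConst (Const.node c)), sh]
        apply main
        · rw [hv1]; simp [eC_apply, hab, h1, h2]
        · rw [hv1]; simp [eC_apply, hab.symm, h3, h4]
      · have vl : v (locC q) = 1 := by rw [hv1]; simp
        refine ⟨{.node a}, by simp, ?_⟩
        rintro (⟨c, d⟩ | q') hq
        swap
        · exact absurd hq (hloc q')
        obtain ⟨ok2, -, hs⟩ := hA _ hq
        rcases hs with ⟨f, hc'⟩ | ⟨f, -, hc'⟩ | ⟨j, okj', hj', hc'⟩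
        · exfalso
          have x1 := congrFun hc' (locC q)
          simp [vl, eC_apply] at x1
          have r1 := congrFun hc' .rho
          have r2 := congrFun hc .rho
          simp only [Pi.add_apply, gv_rho] at r1 r2
          rw [r2, ← x1] at r1
          simp [eC_apply] at r1
        · exfalso
          have x1 := congrFun hc' (locC q)
          simp [vl] at x1
        · have x1 := congrFun hc' (locC q)
          rcases j with j | j
          · simp [vl] at x1
          · simp [vl] at x1
            subst x1
            have := hinj _ _ ok2 ok1 ((z2_move' hc').trans (z2_move' hc).symm)
            rw [this]
            simp [hit]

/-- Goals inside a subspace of dimension `d` can be hit with `d` elements. -/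
lemma span_hit [Finite (Const N)] (ok : Idx N → Prop) (hne : ∀ p, ok (.inl p) → p.1 ≠ p.2) (d : ℕ) :
    ∀ W : Submodule (ZMod 2) (Const N → ZMod 2), Module.finrank (ZMod 2) W ≤ d →
    ∃ X : Finset (Const N), X.card ≤ d ∧ ∀ i, ok i → gv i ∈ W → hit X i := by
  classical
  induction d with
  | zero =>
    intro W hW
    refine ⟨∅, by simp, ?_⟩
    intro i _ hi
    exfalso
    have : W = ⊥ := Submodule.finrank_eq_zero.mp (by omega)
    rw [this, Submodule.mem_bot] at hi
    have := congrFun hi .rho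
    simp at this
  | succ d ih =>
    intro W hW
    have step : ∀ c : Const N, ∀ w ∈ W, w c = 1 → ∃ X : Finset (Const N), X.card ≤ d ∧
        ∀ i, ok i → gv i ∈ W → gv i c = 0 → hit X i := by
      intro c w hw hwc
      let K : Submodule (ZMod 2) (Const N → ZMod 2) :=
        LinearMap.ker (LinearMap.proj (R := ZMod 2) (φ := fun _ : Const N => ZMod 2) c)
      have hlt : W ⊓ K < W := by
        refine lt_of_le_of_ne inf_le_left ?_
        intro h
        rw [← h] at hw
        have : w c = 0 := by simpa [K] using hw.2
        rw [this] at hwc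
        simp at hwc
      have := Submodule.finrank_lt_finrank_of_lt hlt
      obtain ⟨X, hX, hh⟩ := ih (W ⊓ K) (by omega)
      exact ⟨X, hX, fun i hi hiW hic => hh i hi ⟨hiW, by simpa [K] using hic⟩⟩
    have mono : ∀ (X : Finset (Const N)) c i, hit X i → hit (insert c X) i := by
      intro X c i h
      rcases i with p | p
      · simp only [hit, Finset.mem_insert] at h ⊢; tauto
      · simp only [hit, Finset.mem_insert] at h ⊢; tauto
    by_cases hloc : ∃ p, ok (.inr p) ∧ gv (.inr p) ∈ W
    · obtain ⟨p, okp, hp⟩ := hloc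
      obtain ⟨X, hX, hh⟩ := step (locC p) _ hp (by simp)
      refine ⟨insert (locC p) X, (Finset.card_insert_le _ _).trans (by omega), ?_⟩
      intro i hi hiW
      rcases i with q | q
      · exact mono _ _ _ (hh _ hi hiW (by simp))
      · by_cases hqp : p = q
        · subst hqp; simp [hit]
        · exact mono _ _ _ (hh _ hi hiW (by simp [hqp]))
    · by_cases hed : ∃ p, ok (.inl p) ∧ gv (.inl p) ∈ W
      · obtain ⟨p, okp, hp⟩ := hed
        have hpp := hne _ okp
        obtain ⟨X, hX, hh⟩ := step (.node p.1) _ hp (by simp [hpp])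
        refine ⟨insert (.node p.1) X, (Finset.card_insert_le _ _).trans (by omega), ?_⟩
        intro i hi hiW
        rcases i with q | q
        · by_cases h1 : p.1 = q.1
          · simp [hit, h1]
          by_cases h2 : p.1 = q.2
          · simp [hit, h2]
          exact mono _ _ _ (hh _ hi hiW (by simp [h1, h2]))
        · exact absurd ⟨q, hi, hiW⟩ hloc
      · refine ⟨∅, by simp, ?_⟩
        intro i hi hiW
        rcases i with q | q
        · exact absurd ⟨q, hi, hiW⟩ hed
        · exact absurd ⟨q, hi, hiW⟩ hloc

end

/-! ### Evaluation of MultiSLPs -/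
section
variable {C : Type} [DecidableEq C]

def envOf (l : List (List (Term C))) : List (C → ZMod 2) :=
  l.foldl (fun env args => env ++ [(args.map (Term.eval env)).sum]) []

lemma envOf_snoc (l : List (List (Term C))) (a : List (Term C)) :
    envOf (l ++ [a]) = envOf l ++ [(a.map (Term.eval (envOf l))).sum] := by
  simp [envOf, List.foldl_append]

lemma envOf_length (l : List (List (Term C))) : (envOf l).length = l.length := by
  induction l using List.reverseRecOn with
  | nil => rfl
  | append_singleton l a ih => rw [envOf_snoc]; simp [ih]

lemma eval_append (e f : List (C → ZMod 2)) (t : Term C)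
    (h : ∀ j, t = Term.var j → j < e.length) : Term.eval (e ++ f) t = Term.eval e t := by
  cases t with
  | const c => rfl
  | var j =>
    have := h j rfl
    simp [Term.eval, List.getElem?_append_left this]

lemma envOf_getD (l : List (List (Term C)))
    (wf : ∀ i, i < l.length → ∀ t ∈ l.getD i [], ∀ j, t = Term.var j → j < i) :
    ∀ i, i < l.length →
      (envOf l).getD i 0 = ((l.getD i []).map (Term.eval (envOf l))).sum := by
  induction l using List.reverseRecOn with
  | nil => intro i hi; simp at hi
  | append_singleton l a ih =>
    intro i hi
    have hlen := envOf_length l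
    have hev : ((((l ++ [a]).getD i []).map (Term.eval (envOf (l ++ [a]))))) =
        (((l ++ [a]).getD i []).map (Term.eval (envOf l))) := by
      apply List.map_congr_left
      intro t ht
      rw [envOf_snoc]
      apply eval_append
      intro j hj
      have := wf i hi t ht j hj
      simp at hi
      omega
    rw [hev]
    rcases Nat.lt_or_ge i l.length with h | h
    · rw [envOf_snoc, List.getD_append _ _ _ _ (by omega), List.getD_append _ _ _ _ h]
      apply ih _ i h
      intro k hk t ht j hj
      have := wf k (by simp; omega) t (by rwa [List.getD_append _ _ _ _ hk]) j hj
      exact this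
    · have : i = l.length := by simp at hi; omega
      subst this
      rw [envOf_snoc, List.getD_append_right _ _ _ _ (by omega),
        List.getD_append_right _ _ _ _ (by omega), hlen]
      simp

def tval (P : MultiSLP C) (t : Term C) : C → ZMod 2 := Term.eval P.envList t

lemma value_eq (P : MultiSLP C) (i : ℕ) (hi : i < P.stmts.length) :
    P.value i = ((P.stmts.getD i []).map (Term.eval P.envList)).sum :=
  envOf_getD P.stmts P.wfStmts i hi

lemma costM_eq (P : MultiSLP C) :
    P.costM = ∑ i ∈ Finset.range P.stmts.length, ((P.stmts.getD i []).length + 1) := by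
  unfold MultiSLP.costM
  generalize P.stmts = l
  induction l using List.reverseRecOn with
  | nil => simp
  | append_singleton l a ih =>
    rw [List.map_append, List.sum_append, ih, List.length_append, List.length_singleton,
      Finset.sum_range_succ]
    congr 1
    · apply Finset.sum_congr rfl
      intro i hi
      rw [List.getD_append _ _ _ _ (Finset.mem_range.mp hi)]
    · simp
end

/-! ### The lower bound -/

instance constFinite {N : Type} [Finite N] : Finite (Const N) := by
  let f : Const N → Option (N × Fin 3) := fun c => match c with
    | .rho => none
    | .node a => some (a, 0)
    | .lam a => some (a, 1)
    | .mu a => some (a, 2)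
  apply Finite.of_injective f
  intro x y h
  cases x <;> cases y <;> simp_all [f]

section
variable {N : Type} [DecidableEq N]

lemma hit_mono {X Y : Finset (Const N)} (h : X ⊆ Y) (i : Idx N) (hi : hit X i) : hit Y i := by
  rcases i with p | p
  · rcases hi with hi | hi
    · exact Or.inl (h hi)
    · exact Or.inr (h hi)
  · exact h hi

lemma par_e [Fintype (Const N)] (c : Const N) : ∑ d, eConst c d = (1 : ZMod 2) := by
  simp [eC_apply]

lemma par_gv [Fintype (Const N)] (i : Idx N) : ∑ d, gv i d = (1 : ZMod 2) := by
  simp only [gv, Pi.add_apply, Finset.sum_add_distrib, par_e]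
  decide

lemma gv_ne_cc [Finite N] (i : Idx N) (c d : Const N) : gv i ≠ eConst c + eConst d := by
  intro h
  let _ := Fintype.ofFinite (Const N)
  have := congrArg (fun f : Const N → ZMod 2 => ∑ d, f d) h
  simp only [Pi.add_apply, Finset.sum_add_distrib, par_e, par_gv] at this
  exact absurd this (by decide)

lemma gv_ne_cg [Finite N] (i j : Idx N) (c : Const N) : gv i ≠ eConst c + gv j := by
  intro h
  let _ := Fintype.ofFinite (Const N)
  have := congrArg (fun f : Const N → ZMod 2 => ∑ d, f d) h
  simp only [Pi.add_apply, Finset.sum_add_distrib, par_e, par_gv] at this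
  exact absurd this (by decide)

lemma ne_of_rho (i : Idx N) (u v : Const N → ZMod 2) (hu : u .rho = 1) (hv : v .rho = 1) :
    gv i ≠ u + v := by
  intro h
  have := congrFun h .rho
  simp only [Pi.add_apply, gv_rho, hu, hv] at this
  exact absurd this (by decide)

lemma touched_of_gam (S : Finset N) (i : Idx N) (hne : ∀ p, i = .inl p → p.1 ≠ p.2)
    (a : N) (ha : a ∈ S) (c : Const N) (h : gv i = eConst c + gamV a) : touched S i := by
  by_contra ht
  have h0 := congrFun h .rho
  have h1 := congrFun h (.node a)
  have hc : c ≠ .rho := by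
    rintro rfl
    simp [eC_apply] at h0
  rcases i with p | p
  · simp only [touched, not_or] at ht
    have e1 : a ≠ p.1 := by rintro rfl; exact ht.1 ha
    have e2 : a ≠ p.2 := by rintro rfl; exact ht.2 ha
    have hca : c = .node a := by
      by_contra hca
      simp [e1, e2, eC_apply, Ne.symm hca] at h1
    subst hca
    have h2 := congrFun h (.node p.1)
    simp [hne p rfl, eC_apply, e1.symm] at h2
  · simp only [touched] at ht
    have e1 : a ≠ p.1 := by rintro rfl; exact ht ha
    have hca : c = .node a := by
      by_contra hca
      simp [e1, eC_apply, Ne.symm hca] at h1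
    subst hca
    have h2 := congrFun h (.node p.1)
    simp [eC_apply, e1.symm] at h2

lemma lower [Fintype N] (Gs : Finset (Idx N))
    (hinj : ∀ i j, i ∈ Gs → j ∈ Gs → gv i = gv j → i = j)
    (hne : ∀ p, Sum.inl p ∈ Gs → p.1 ≠ p.2)
    (P : MultiSLP (Const N))
    (hP : ∀ i ∈ Gs, ∃ k, k < P.stmts.length ∧ P.value k = gv i) :
    ∃ (S : Finset N) (X : Finset (Const N)) (U : Finset (Idx N)), U ⊆ Gs ∧
      3 * Gs.card + U.card + 3 * S.card + X.card ≤ P.costM ∧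
      ∀ i ∈ Gs, i ∉ U → ¬ touched S i → hit X i := by
  classical
  choose! ord hord using hP
  have hne' : ∀ i ∈ Gs, ∀ p, i = .inl p → p.1 ≠ p.2 := by
    rintro i hi p rfl; exact hne p hi
  have ordinj : ∀ i ∈ Gs, ∀ j ∈ Gs, ord i = ord j → i = j := by
    intro i hi j hj h
    apply hinj _ _ hi hj
    rw [← (hord i hi).2, ← (hord j hj).2, h]
  set m := P.stmts.length with hm
  let n : ℕ → ℕ := fun k => (P.stmts.getD k []).length
  have hn2 : ∀ k, k < m → 2 ≤ n k := by
    intro k hk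
    apply P.arity
    rw [List.getD_eq_getElem _ _ hk]
    exact List.getElem_mem _
  let I := Gs.image ord
  let Tm := Finset.range m \ I
  let S : Finset N := Finset.univ.filter (fun a => ∃ k ∈ Tm, P.value k = gamV a)
  let TS := Tm.filter (fun k => ∃ a, P.value k = gamV a)
  let T' := Tm.filter (fun k => ¬ ∃ a, P.value k = gamV a)
  let U := Gs.filter (fun i => 3 ≤ n (ord i))
  have hIm : I ⊆ Finset.range m := by
    intro k hk
    obtain ⟨i, hi, rfl⟩ := Finset.mem_image.mp hk
    exact Finset.mem_range.mpr (hord i hi).1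
  -- solos
  have hsolo : ∀ k ∈ T', ∃ X : Finset (Const N), X.card ≤ 2 ∧ ∀ i, (i ∈ Gs ∧ ¬ touched S i ∧
      ((∃ c, P.value k + gv i = eConst c) ∨ (∃ c ∈ S, P.value k + gv i = gamV c) ∨
        ∃ j, j ∈ Gs ∧ ord j < ord i ∧ P.value k + gv i = gv j)) → hit X i := by
    intro k hk
    apply solo (fun i => i ∈ Gs) hinj hne S ord (P.value k)
    · intro a ha
      exact (Finset.mem_filter.mp hk).2 ⟨a, ha⟩
    · intro i hi; exact hi
  choose! Xs hXs1 hXs2 using hsolo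
  obtain ⟨XT, hXT1, hXT2⟩ := span_hit (fun i => i ∈ Gs) hne T'.card
    (Submodule.span (ZMod 2) ((T'.image P.value : Finset (Const N → ZMod 2)) :
      Set (Const N → ZMod 2)))
    ((finrank_span_finset_le_card _).trans Finset.card_image_le)
  refine ⟨S, XT ∪ T'.biUnion Xs, U, Finset.filter_subset _ _, ?_, ?_⟩
  · have hX : (XT ∪ T'.biUnion Xs).card ≤ 3 * T'.card := by
      have h1 := Finset.card_union_le XT (T'.biUnion Xs)
      have h2 : (T'.biUnion Xs).card ≤ T'.card * 2 :=
        Finset.card_biUnion_le_card_mul _ _ _ (fun k hk => hXs1 k hk)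
      omega
    have hS : S.card ≤ TS.card := by
      have : ∀ a ∈ S, ∃ k ∈ Tm, P.value k = gamV a := fun a ha => (Finset.mem_filter.mp ha).2
      choose! f hf using this
      apply Finset.card_le_card_of_injOn f
      · intro a ha
        exact Finset.mem_coe.mpr (Finset.mem_filter.mpr ⟨(hf a ha).1, a, (hf a ha).2⟩)
      · intro a ha b hb h
        have e : gamV a = gamV b := by rw [← (hf a ha).2, ← (hf b hb).2, h]
        have := congrFun e (.node a)
        simpa using this
    have hTm : TS.card + T'.card = Tm.card := Finset.card_filter_add_card_filter_not _
    have hcost : P.costM = ∑ k ∈ Tm, (n k + 1) + ∑ k ∈ I, (n k + 1) := by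
      rw [costM_eq, Finset.sum_sdiff hIm]
    have h1 : Tm.card * 3 ≤ ∑ k ∈ Tm, (n k + 1) := by
      rw [← smul_eq_mul]
      apply Finset.card_nsmul_le_sum
      intro k hk
      have := hn2 k (Finset.mem_range.mp (Finset.mem_sdiff.mp hk).1)
      omega
    have h2 : 3 * Gs.card + U.card ≤ ∑ k ∈ I, (n k + 1) := by
      rw [Finset.sum_image (fun i hi j hj h => ordinj i hi j hj h), Finset.card_filter,
        mul_comm, ← smul_eq_mul, ← Finset.sum_const, ← Finset.sum_add_distrib]
      apply Finset.sum_le_sum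
      intro i hi
      have := hn2 _ (hord i hi).1
      split_ifs <;> omega
    omega
  · intro i hi hiU hit'
    have hlen : n (ord i) = 2 := by
      have := hn2 _ (hord i hi).1
      have : ¬ 3 ≤ n (ord i) := fun h => hiU (Finset.mem_filter.mpr ⟨hi, h⟩)
      omega
    obtain ⟨t, u, htu⟩ := List.length_eq_two.mp hlen
    have hval := value_eq P (ord i) (hord i hi).1
    rw [(hord i hi).2, htu] at hval
    simp only [List.map_cons, List.map_nil, List.sum_cons, List.sum_nil, add_zero] at hval
    have cls : ∀ t ∈ P.stmts.getD (ord i) [],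
        (∃ c, Term.eval P.envList t = eConst c) ∨
        (∃ j ∈ Gs, ord j < ord i ∧ Term.eval P.envList t = gv j) ∨
        (∃ a ∈ S, Term.eval P.envList t = gamV a) ∨
        (∃ k ∈ T', Term.eval P.envList t = P.value k) := by
      intro t ht
      cases t with
      | const c => exact Or.inl ⟨c, rfl⟩
      | var j =>
        have hj := P.wfStmts _ (hord i hi).1 _ ht j rfl
        have hjm : j < m := hj.trans (hord i hi).1
        right
        by_cases hI : j ∈ I
        · obtain ⟨g, hg, rfl⟩ := Finset.mem_image.mp hI
          exact Or.inl ⟨g, hg, hj, (hord g hg).2⟩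
        · have hT : j ∈ Tm := Finset.mem_sdiff.mpr ⟨Finset.mem_range.mpr hjm, hI⟩
          right
          by_cases ha : ∃ a, P.value j = gamV a
          · obtain ⟨a, ha⟩ := ha
            exact Or.inl ⟨a, Finset.mem_filter.mpr ⟨Finset.mem_univ _, j, hT, ha⟩, ha⟩
          · exact Or.inr ⟨j, Finset.mem_filter.mpr ⟨hT, ha⟩, rfl⟩
    have key : ∀ t u : Const N → ZMod 2, gv i = t + u → (∃ k ∈ T', t = P.value k) →
        ((∃ c, u = eConst c) ∨ (∃ j ∈ Gs, ord j < ord i ∧ u = gv j) ∨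
        (∃ a ∈ S, u = gamV a) ∨ (∃ k ∈ T', u = P.value k)) →
        hit (XT ∪ T'.biUnion Xs) i := by
      rintro t u h ⟨k, hk, rfl⟩ hu
      have h' : P.value k + gv i = u := by rw [h, ← add_assoc, z2_self, zero_add]
      have hsub : Xs k ⊆ XT ∪ T'.biUnion Xs :=
        (Finset.subset_biUnion_of_mem Xs hk).trans Finset.subset_union_right
      rcases hu with ⟨c, rfl⟩ | ⟨j, hj, hjo, rfl⟩ | ⟨a, ha, rfl⟩ | ⟨l, hl, rfl⟩
      · exact hit_mono hsub i (hXs2 k hk i ⟨hi, hit', Or.inl ⟨c, h'⟩⟩)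
      · exact hit_mono hsub i (hXs2 k hk i ⟨hi, hit', Or.inr (Or.inr ⟨j, hj, hjo, h'⟩)⟩)
      · exact hit_mono hsub i (hXs2 k hk i ⟨hi, hit', Or.inr (Or.inl ⟨a, ha, h'⟩)⟩)
      · apply hit_mono Finset.subset_union_left i
        apply hXT2 i hi
        rw [h]
        apply Submodule.add_mem
        · exact Submodule.subset_span (Finset.mem_coe.mpr (Finset.mem_image_of_mem _ hk))
        · exact Submodule.subset_span (Finset.mem_coe.mpr (Finset.mem_image_of_mem _ hl))
    have ct := cls t (by rw [htu]; simp)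
    have cu := cls u (by rw [htu]; simp)
    have hval' := hval.trans (add_comm _ _)
    by_cases kt : ∃ k ∈ T', Term.eval P.envList t = P.value k
    · exact key _ _ hval kt cu
    by_cases ku : ∃ k ∈ T', Term.eval P.envList u = P.value k
    · exact key _ _ hval' ku ct
    exfalso
    rcases ct with ⟨c, ht⟩ | ⟨j, hj, hjo, ht⟩ | ⟨a, ha, ht⟩ | hh
    · rcases cu with ⟨d, hu⟩ | ⟨l, hl, hlo, hu⟩ | ⟨b, hb, hu⟩ | hh
      · rw [ht, hu] at hval; exact gv_ne_cc _ _ _ hval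
      · rw [ht, hu] at hval; exact gv_ne_cg _ _ _ hval
      · rw [ht, hu] at hval; exact hit' (touched_of_gam S i (hne' i hi) b hb c hval)
      · exact ku hh
    · rcases cu with ⟨d, hu⟩ | ⟨l, hl, hlo, hu⟩ | ⟨b, hb, hu⟩ | hh
      · rw [ht, hu] at hval'; exact gv_ne_cg _ _ _ hval'
      · rw [ht, hu] at hval; exact ne_of_rho i _ _ (by simp) (by simp) hval
      · rw [ht, hu] at hval; exact ne_of_rho i _ _ (by simp) (by simp) hval
      · exact ku hh
    · rcases cu with ⟨d, hu⟩ | ⟨l, hl, hlo, hu⟩ | ⟨b, hb, hu⟩ | hh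
      · rw [ht, hu] at hval'; exact hit' (touched_of_gam S i (hne' i hi) a ha d hval')
      · rw [ht, hu] at hval; exact ne_of_rho i _ _ (by simp) (by simp) hval
      · rw [ht, hu] at hval; exact ne_of_rho i _ _ (by simp) (by simp) hval
      · exact ku hh
    · exact kt hh
end

/-! ### Building the new program -/

section
variable {N : Type} [DecidableEq N]

lemma goalStmt (ds : List N) (i : Idx N) : ∃ s : List (Term (Const N)),
    (∃ (k : ℕ) (hk : k < ds.length) (x : Const N), s = [Term.var k, Term.const x] ∧
      gamV ds[k] + eConst x = gv i ∧ touched ds.toFinset i) ∨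
    (∃ x y : Const N, s = [Term.const Const.rho, Term.const x, Term.const y] ∧
      eConst Const.rho + eConst x + eConst y = gv i ∧ ¬ touched ds.toFinset i) := by
  by_cases h : touched ds.toFinset i
  · have key : ∃ a ∈ ds, ∃ x, gamV a + eConst x = gv i := by
      rcases i with p | p
      · simp only [touched, List.mem_toFinset] at h
        rcases h with h | h
        · exact ⟨p.1, h, .node p.2, rfl⟩
        · refine ⟨p.2, h, .node p.1, ?_⟩
          simp only [gamV, gv, gx, gy]
          exact add_right_comm _ _ _
      · simp only [touched, List.mem_toFinset] at h
        exact ⟨p.1, h, locC p, rfl⟩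
    obtain ⟨a, ha, x, hx⟩ := key
    obtain ⟨k, hk, rfl⟩ := List.getElem_of_mem ha
    exact ⟨_, Or.inl ⟨k, hk, x, rfl, hx, h⟩⟩
  · exact ⟨_, Or.inr ⟨gx i, gy i, rfl, rfl, h⟩⟩

open Classical in
lemma build (ds : List N) (gl : List (Idx N)) :
    ∃ Q : MultiSLP (Const N), Q.result = gl.map gv ∧
      Q.costM = 3 * ds.length +
        (gl.map fun i => if touched ds.toFinset i then 3 else 4).sum ∧
      (∀ i, i < Q.stmts.length → Term.var i ∉ Q.ret →
        ∃ a : N, Q.stmts.getD i [] = [Term.const Const.rho, Term.const (Const.node a)]) ∧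
      (∀ i, i < Q.stmts.length → Term.var i ∈ Q.ret →
        (∃ j, j < i ∧ ∃ (a : N) (x : Const N),
            Q.stmts.getD j [] = [Term.const Const.rho, Term.const (Const.node a)] ∧
            Q.stmts.getD i [] = [Term.var j, Term.const x]) ∨
        (∃ x y : Const N,
            Q.stmts.getD i [] = [Term.const Const.rho, Term.const x, Term.const y])) := by
  choose gs hgs using goalStmt ds
  let A : List (List (Term (Const N))) :=
    ds.map fun a => [Term.const Const.rho, Term.const (Const.node a)]
  let B : List (List (Term (Const N))) := gl.map gs
  have hA : A.length = ds.length := by simp [A]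
  have hB : B.length = gl.length := by simp [B]
  have getA : ∀ i (h : i < ds.length), (A ++ B).getD i [] =
      [Term.const Const.rho, Term.const (Const.node ds[i])] := by
    intro i h
    rw [List.getD_append _ _ _ _ (by omega), List.getD_eq_getElem _ _ (by omega)]
    simp [A]
  have getB : ∀ i (h : i < gl.length), (A ++ B).getD (ds.length + i) [] = gs gl[i] := by
    intro i h
    rw [List.getD_append_right _ _ _ _ (by omega), List.getD_eq_getElem _ _ (by omega)]
    simp [B, hA]
  have split : ∀ i, i < (A ++ B).length →
      i < ds.length ∨ ∃ j, j < gl.length ∧ i = ds.length + j := by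
    intro i hi
    rw [List.length_append, hA, hB] at hi
    by_cases h : i < ds.length
    · exact Or.inl h
    · exact Or.inr ⟨i - ds.length, by omega, by omega⟩
  let Q : MultiSLP (Const N) :=
    { stmts := A ++ B
      ret := (List.range gl.length).map fun k => Term.var (ds.length + k)
      arity := by
        intro args h
        rcases List.mem_append.mp h with h | h
        · obtain ⟨a, -, rfl⟩ := List.mem_map.mp h
          simp
        · obtain ⟨g, -, rfl⟩ := List.mem_map.mp h
          rcases hgs g with ⟨k, hk, x, h, -, -⟩ | ⟨x, y, h, -, -⟩ <;> rw [h] <;> simp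
      wfStmts := by
        rintro i hi t ht j rfl
        rcases split i hi with h | ⟨l, hl, rfl⟩
        · rw [getA i h] at ht
          simp at ht
        · rw [getB l hl] at ht
          rcases hgs gl[l] with ⟨k, hk, x, h, -, -⟩ | ⟨x, y, h, -, -⟩
          · rw [h] at ht
            simp at ht
            omega
          · rw [h] at ht
            simp at ht
      wfRet := by
        rintro t ht j rfl
        simp only [List.mem_map, List.mem_range, Term.var.injEq] at ht
        obtain ⟨k, hk, rfl⟩ := ht
        rw [List.length_append, hA, hB]
        omega }
  have hQs : Q.stmts = A ++ B := rfl
  have hQl : Q.stmts.length = ds.length + gl.length := by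
    rw [hQs, List.length_append, hA, hB]
  have valA : ∀ i (h : i < ds.length), Q.value i = gamV ds[i] := by
    intro i h
    rw [value_eq Q i (by omega), hQs, getA i h]
    simp [Term.eval, gamV]
  have valB : ∀ i (h : i < gl.length), Q.value (ds.length + i) = gv gl[i] := by
    intro i h
    rw [value_eq Q _ (by omega), hQs, getB i h]
    rcases hgs gl[i] with ⟨k, hk, x, h, h2, -⟩ | ⟨x, y, h, h2, -⟩
    · rw [h, ← h2]
      have := valA k hk
      simp only [List.map_cons, List.map_nil, List.sum_cons, List.sum_nil, add_zero]
      rw [← this]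
      rfl
    · rw [h, ← h2]
      simp only [List.map_cons, List.map_nil, List.sum_cons, List.sum_nil, add_zero]
      rw [add_assoc]
      rfl
  have memret : ∀ i, Term.var i ∈ Q.ret ↔ ∃ k, k < gl.length ∧ ds.length + k = i := by
    intro i
    simp [Q]
  refine ⟨Q, ?_, ?_, ?_, ?_⟩
  · apply List.ext_getElem
    · simp [MultiSLP.result, Q]
    · intro i h1 h2
      have hi : i < gl.length := by simpa using h2
      have := valB i hi
      simp only [List.getElem_map]
      rw [← this]
      simp [MultiSLP.result, Q, Term.eval, MultiSLP.value]
  · unfold MultiSLP.costM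
    rw [hQs, List.map_append, List.sum_append]
    congr 1
    · simp [A, Function.comp_def, mul_comm]
    · simp only [B, List.map_map]
      congr 1
      apply List.map_congr_left
      intro g _
      rcases hgs g with ⟨k, hk, x, h, -, ht⟩ | ⟨x, y, h, -, ht⟩
      · simp [h, ht]
      · simp [h, ht]
  · intro i hi hr
    rcases split i hi with h | ⟨l, hl, rfl⟩
    · exact ⟨ds[i], getA i h⟩
    · exact absurd ((memret _).mpr ⟨l, hl, rfl⟩) hr
  · intro i hi hr
    obtain ⟨l, hl, rfl⟩ := (memret i).mp hr
    rcases hgs gl[l] with ⟨k, hk, x, h, -, ht⟩ | ⟨x, y, h, -, ht⟩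
    · exact Or.inl ⟨k, by omega, ds[k], x, getA k hk, (getB l hl).trans h⟩
    · exact Or.inr ⟨x, y, (getB l hl).trans h⟩
end

/-- **Removing the XOR-cancellation (Lemma A6 of the appendix).**  Let `G` be a finite
simple graph with node set `N` and edge set `E` (enumerated without repetition by `L`;
`nodes` enumerates `N`) and let `P` be any MultiSLP equivalent to `P_G`.  Then there is
a MultiSLP `Q` equivalent to `P_G` such that `#_M(Q) ≤ #_M(P)`, every temporal
(non-returned) variable of `Q` is of the form `Γ_a ← ρ ⊕ a` for some node `a ∈ N`, and
the defining statement of every returned goal variable `g` of `Q` has one of the two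
forms `g ← Γ_a ⊕ x` (for some node `a` with `Γ_a` in `Q` and some constant `x`) or
`g ← ρ ⊕ x ⊕ y` (for constants `x, y`); in particular `Q` computes every goal without
using the XOR-cancellation law. -/
theorem remove_cancellation {N : Type} [Fintype N] [DecidableEq N]
    (G : SimpleGraph N) [DecidableRel G.Adj]
    (L : List (N × N)) (nodes : List N)
    (hnodesN : nodes.Nodup) (hnodesA : ∀ a : N, a ∈ nodes)
    (hLN : (L.map fun p => s(p.1, p.2)).Nodup)
    (hLadj : ∀ p ∈ L, G.Adj p.1 p.2)
    (hLall : ∀ a b : N, G.Adj a b → s(a, b) ∈ L.map fun p => s(p.1, p.2))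
    (P : MultiSLP (Const N)) (hP : P.result = targetValues L nodes) :
    ∃ Q : MultiSLP (Const N), Q.result = targetValues L nodes ∧ Q.costM ≤ P.costM ∧
      (∀ i, i < Q.stmts.length → Term.var i ∉ Q.ret →
        ∃ a : N, Q.stmts.getD i [] = [Term.const Const.rho, Term.const (Const.node a)]) ∧
      (∀ i, i < Q.stmts.length → Term.var i ∈ Q.ret →
        (∃ j, j < i ∧ ∃ (a : N) (x : Const N),
            Q.stmts.getD j [] = [Term.const Const.rho, Term.const (Const.node a)] ∧
            Q.stmts.getD i [] = [Term.var j, Term.const x]) ∨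
        (∃ x y : Const N,
            Q.stmts.getD i [] = [Term.const Const.rho, Term.const x, Term.const y])) := by
  classical
  let gl : List (Idx N) := L.map Sum.inl ++ (nodes ×ˢ [true, false]).map Sum.inr
  have hgl : targetValues L nodes = gl.map gv := by
    simp only [targetValues, gl, List.map_append, List.map_map]
    congr 1
    simp only [SProd.sprod, List.product, List.map_flatMap]
    rfl
  have hLnd : L.Nodup := List.Nodup.of_map _ hLN
  have hnd : gl.Nodup := by
    refine List.Nodup.append (hLnd.map Sum.inl_injective)
      (List.Nodup.map Sum.inr_injective (hnodesN.product (by simp))) ?_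
    intro x hx hy
    simp only [List.mem_map] at hx hy
    obtain ⟨p, -, rfl⟩ := hx
    obtain ⟨q, -, hq⟩ := hy
    simp at hq
  let Gs : Finset (Idx N) := L.toFinset.disjSum Finset.univ
  have hGs : gl.toFinset = Gs := by
    ext i
    rcases i with p | ⟨a, b⟩
    · simp [gl, Gs]
    · cases b <;> simp [gl, Gs, hnodesA]
  have hmemL : ∀ p, Sum.inl p ∈ Gs → p ∈ L := by
    intro p hp; simpa [Gs] using hp
  have hne : ∀ p, Sum.inl p ∈ Gs → p.1 ≠ p.2 := fun p hp => (hLadj p (hmemL p hp)).ne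
  have hinj : ∀ i j, i ∈ Gs → j ∈ Gs → gv i = gv j → i = j := by
    rintro (p | p) (q | q) hi hj h
    · have h1 := congrFun h (.node p.1)
      have h2 := congrFun h (.node p.2)
      have np := hne p hi
      have nq := hne q hj
      have hs : s(p.1, p.2) = s(q.1, q.2) := by
        rw [Sym2.eq_iff]
        refine gv_pair p.1 p.2 q.1 q.2 np (h1.symm.trans ?_) (h2.symm.trans ?_)
        · simp only [gv_node_inl, np, if_true, if_false, add_zero]
        · simp only [gv_node_inl, np.symm, if_true, if_false, zero_add]
      exact congrArg Sum.inl (List.inj_on_of_nodup_map hLN (hmemL p hi) (hmemL q hj) hs)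
    · have h1 := congrFun h (locC q)
      simp at h1
    · have h1 := congrFun h (locC p)
      simp at h1
    · have h1 := congrFun h (locC p)
      simp at h1
      rw [h1]
  have hgoal : ∀ i ∈ Gs, ∃ k, k < P.stmts.length ∧ P.value k = gv i := by
    intro i hi
    have hmem : gv i ∈ P.result := by
      rw [hP, hgl]
      apply List.mem_map_of_mem
      rw [← hGs] at hi
      exact List.mem_toFinset.mp hi
    obtain ⟨t, ht, hte⟩ := List.mem_map.mp hmem
    cases t with
    | const c =>
      exfalso
      refine gv_ne_const i ?_ c hte.symm
      rintro p rfl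
      exact hne p hi
    | var k => exact ⟨k, P.wfRet _ ht k rfl, hte⟩
  obtain ⟨S, X, U, hUG, hcost, hhit⟩ := lower Gs hinj hne P hgoal
  let Xn : Finset N := Finset.univ.filter (fun a => Const.node a ∈ X)
  let Xl : Finset (N × Bool) := Finset.univ.filter (fun q => locC q ∈ X)
  let D : Finset N := S ∪ Xn
  obtain ⟨Q, hQr, hQc, hQ1, hQ2⟩ := build D.toList gl
  refine ⟨Q, hQr.trans hgl.symm, ?_, hQ1, hQ2⟩
  rw [hQc, ← List.sum_toFinset _ hnd, hGs]
  have hDl : D.toList.toFinset = D := Finset.toList_toFinset D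
  rw [hDl, Finset.length_toList]
  have hsum : ∑ i ∈ Gs, (if touched D i then 3 else 4) =
      3 * Gs.card + (Gs.filter (fun i => ¬ touched D i)).card := by
    rw [Finset.card_filter, mul_comm, ← smul_eq_mul, ← Finset.sum_const,
      ← Finset.sum_add_distrib]
    apply Finset.sum_congr rfl
    intro i _
    split_ifs <;> rfl
  rw [hsum]
  let Ue : Finset (N × N) := L.toFinset.filter (fun p => Sum.inl p ∈ U)
  let Ul : Finset (N × Bool) := Finset.univ.filter (fun q => Sum.inr q ∈ U)
  have hU : Ue.card + Ul.card ≤ U.card := by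
    rw [← Finset.card_disjSum]
    apply Finset.card_le_card
    rintro (p | p) hp
    · simpa [Ue] using (Finset.mem_filter.mp (Finset.inl_mem_disjSum.mp hp)).2
    · simpa [Ul] using (Finset.mem_filter.mp (Finset.inr_mem_disjSum.mp hp)).2
  have hX : Xn.card + Xl.card ≤ X.card := by
    rw [← Finset.card_disjSum]
    apply Finset.card_le_card_of_injOn (Sum.elim Const.node locC)
    · rintro (p | p) hp
      · exact (Finset.mem_filter.mp (Finset.inl_mem_disjSum.mp (Finset.mem_coe.mp hp))).2
      · exact (Finset.mem_filter.mp (Finset.inr_mem_disjSum.mp (Finset.mem_coe.mp hp))).2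
    · rintro (p | p) _ (q | q) _ h
      · simpa using h
      · simp at h
      · simp at h
      · simpa using h
  have hunt : (Gs.filter (fun i => ¬ touched D i)).card ≤ Ue.card + Dᶜ.card * 2 := by
    have e : (Dᶜ ×ˢ (Finset.univ : Finset Bool)).card = Dᶜ.card * 2 := by
      rw [Finset.card_product]; rfl
    rw [← e, ← Finset.card_disjSum]
    apply Finset.card_le_card
    intro i hi
    obtain ⟨hiG, hit'⟩ := Finset.mem_filter.mp hi
    rcases i with p | p
    · rw [Finset.inl_mem_disjSum]
      refine Finset.mem_filter.mpr ⟨List.mem_toFinset.mpr (hmemL p hiG), ?_⟩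
      by_contra hpU
      simp only [touched, not_or, D, Finset.mem_union] at hit'
      have := hhit _ hiG hpU (by simp only [touched]; tauto)
      simp only [hit] at this
      simp only [Xn, Finset.mem_filter, Finset.mem_univ, true_and] at hit'
      tauto
    · rw [Finset.inr_mem_disjSum]
      simp only [touched] at hit'
      simp [hit']
  have hSl : Sᶜ.card * 2 ≤ Ul.card + Xl.card := by
    have e : (Sᶜ ×ˢ (Finset.univ : Finset Bool)).card = Sᶜ.card * 2 := by
      rw [Finset.card_product]; rfl
    rw [← e]
    refine le_trans (Finset.card_le_card ?_) (Finset.card_union_le _ _)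
    intro q hq
    have hqS : q.1 ∉ S := by simpa using hq
    by_cases hqU : Sum.inr q ∈ U
    · exact Finset.mem_union_left _ (by simp [Ul, hqU])
    · apply Finset.mem_union_right
      have := hhit (Sum.inr q) (by simp [Gs]) hqU hqS
      simp only [hit] at this
      simp [Xl, this]
  have hD : D.card ≤ S.card + Xn.card := Finset.card_union_le _ _
  have c1 := Finset.card_add_card_compl D
  have c2 := Finset.card_add_card_compl S
  omega
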